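/- In the consecutive prime power construction, for every nonzero β ∈ K, set M := N_β + I_{q+1} ⊗ (J_{q²} − I_q ⊗ J_q). Then M · M^⊤ = q²·I_{(q+1)q²} + (q−1)(q−3)·(I_{q+1} ⊗ J_{q²}) + 3(q−1)·J_{(q+1)q²}; that is, M is the incidence matrix of a symmetric group divisible design with parameters ((q+1)q², 2q²−q, q+1, q², q(q−1), 3(q−1)). -/

import Mathlib

open Matrix Kronecker BigOperators

noncomputable section

/-- The all-ones matrix. -/
def allOnes (n : Type*) : Matrix n n ℝ := Matrix.of fun _ _ => 1

/-- The auxiliary matrix `C_α` for `α ∈ F`: the `((a,u),(b,v))`-entry is `1` iff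
`v − u = α·(b − a)`. -/
def auxC {F : Type*} [Field F] [Fintype F] [DecidableEq F] (α : F) :
    Matrix (F × F) (F × F) ℝ :=
  Matrix.of fun p r => if r.2 - p.2 = α * (r.1 - p.1) then 1 else 0

/-- The permutation matrix `P_{β,γ}` with `(a,b)`-entry `1` iff `β·(−a+b) = γ`. -/
def permP {K : Type*} [Field K] [DecidableEq K] (β γ : K) : Matrix K K ℝ :=
  Matrix.of fun a b => if β * (-a + b) = γ then 1 else 0

/-- The matrix `N_β = Σ_{γ∈K∖{0}} P_{β,γ} ⊗ C_{ψ(γ)}` of the consecutive prime power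
construction, where `ψ : K∖{0} → F` is a fixed bijection. -/
def NN {F K : Type*} [Field F] [Fintype F] [DecidableEq F]
    [Field K] [Fintype K] [DecidableEq K]
    (ψ : {x : K // x ≠ 0} ≃ F) (β : K) :
    Matrix (K × (F × F)) (K × (F × F)) ℝ :=
  ∑ γ : {x : K // x ≠ 0}, permP β (γ : K) ⊗ₖ auxC (ψ γ)

def DD (F : Type*) [Field F] [Fintype F] [DecidableEq F] : Matrix (F × F) (F × F) ℝ :=
  allOnes (F × F) - (1 : Matrix F F ℝ) ⊗ₖ allOnes F

def GG {F K : Type*} [Field F] [Fintype F] [DecidableEq F] [Field K] [DecidableEq K]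
    (ψ : {x : K // x ≠ 0} ≃ F) (t : K) : Matrix (F × F) (F × F) ℝ :=
  if h : t ≠ 0 then auxC (ψ ⟨t, h⟩) else DD F

section aux
variable {F K : Type*} [Field F] [Fintype F] [DecidableEq F] [Field K] [Fintype K] [DecidableEq K]

lemma DD_apply (x y : F × F) : DD F x y = 1 - if x.1 = y.1 then 1 else 0 := by
  simp [DD, allOnes, Matrix.kroneckerMap_apply, Matrix.one_apply]

lemma auxC_symm (α : F) : (auxC α)ᵀ = auxC α := by
  ext x y
  simp only [auxC, transpose_apply, of_apply]
  congr 1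
  apply propext
  constructor <;> intro h <;> linear_combination -h

lemma DD_symm : (DD F)ᵀ = DD F := by
  ext x y
  simp [DD_apply, eq_comm]

lemma GG_symm (ψ : {x : K // x ≠ 0} ≃ F) (t : K) : (GG ψ t)ᵀ = GG ψ t := by
  unfold GG
  split_ifs
  · exact auxC_symm _
  · exact DD_symm

lemma CC_apply (α α' : F) (x y : F × F) : (auxC α * auxC α') x y =
    ∑ c : F, if y.2 - x.2 - α * (c - x.1) = α' * (y.1 - c) then (1:ℝ) else 0 := by
  rw [Matrix.mul_apply, Fintype.sum_prod_type]
  refine Finset.sum_congr rfl fun c _ => ?_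
  rw [Finset.sum_eq_single (x.2 + α * (c - x.1))]
  · simp [auxC, sub_sub]
  · intro b _ hb
    have : ¬ (b - x.2 = α * (c - x.1)) := fun h => hb (by linear_combination h)
    simp [auxC, this]
  · simp

lemma CC_same (α : F) : auxC α * auxC α = (Fintype.card F : ℝ) • auxC α := by
  ext x y
  rw [CC_apply]
  have : ∀ c : F, (y.2 - x.2 - α * (c - x.1) = α * (y.1 - c)) ↔ y.2 - x.2 = α * (y.1 - x.1) := by
    intro c
    constructor <;> intro h <;> linear_combination h
  simp [this, auxC]

lemma CC_ne (α α' : F) (h : α ≠ α') : auxC α * auxC α' = allOnes (F × F) := by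
  ext x y
  rw [CC_apply]
  have h' : α' - α ≠ 0 := sub_ne_zero.2 h.symm
  have : ∀ c : F, (y.2 - x.2 - α * (c - x.1) = α' * (y.1 - c)) ↔
      c = (α' * y.1 - α * x.1 - (y.2 - x.2)) / (α' - α) := by
    intro c
    rw [eq_div_iff h']
    constructor <;> intro h <;> linear_combination h
  simp [this, allOnes]

lemma CD (α : F) : auxC α * DD F = ((Fintype.card F : ℝ) - 1) • allOnes (F × F) := by
  ext x y
  rw [Matrix.mul_apply, Fintype.sum_prod_type]
  have : ∀ c : F, ∑ w : F, auxC α x (c, w) * DD F (c, w) y = 1 - if c = y.1 then 1 else 0 := by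
    intro c
    simp only [DD_apply, ← Finset.sum_mul, auxC, of_apply, sub_eq_iff_eq_add]
    simp
  simp [this, allOnes]

lemma DC (α : F) : DD F * auxC α = ((Fintype.card F : ℝ) - 1) • allOnes (F × F) := by
  have h := congrArg transpose (CD α)
  rw [transpose_mul, DD_symm, auxC_symm] at h
  rw [h]
  ext; simp [allOnes]

lemma DD_sq_apply (x y : F × F) : (DD F * DD F) x y =
    (Fintype.card F : ℝ) * ((Fintype.card F : ℝ) - 2 + if x.1 = y.1 then 1 else 0) := by
  rw [Matrix.mul_apply, Fintype.sum_prod_type]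
  have h : ∀ c : F, ∑ w : F, DD F x (c, w) * DD F (c, w) y = (Fintype.card F : ℝ) *
      (1 - (if x.1 = c then 1 else 0) - (if c = y.1 then 1 else 0) +
        (if x.1 = c then (if c = y.1 then 1 else 0) else 0)) := by
    intro c
    simp only [DD_apply, Finset.sum_const, nsmul_eq_mul, Finset.card_univ]
    congr 1
    split_ifs <;> norm_num
  simp only [h, ← Finset.mul_sum]
  congr 1
  simp [Finset.sum_add_distrib, Finset.sum_sub_distrib]
  ring

lemma sumC_apply (x y : F × F) : ∑ α : F, auxC α x y =
    DD F x y + (Fintype.card F : ℝ) * (1 : Matrix (F × F) (F × F) ℝ) x y := by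
  rw [DD_apply, Matrix.one_apply]
  obtain ⟨a, u⟩ := x
  obtain ⟨b, v⟩ := y
  simp only [auxC, of_apply, Prod.mk.injEq]
  by_cases hab : a = b
  · subst hab
    by_cases huv : u = v
    · subst huv; simp
    · simp [huv, sub_eq_zero, Ne.symm huv]
  · have h' : b - a ≠ 0 := sub_ne_zero.2 (Ne.symm hab)
    have : ∀ α : F, (v - u = α * (b - a)) ↔ α = (v - u) / (b - a) := by
      intro α
      rw [eq_div_iff h']; exact eq_comm
    simp [this, hab]

lemma GG_mul_ne (ψ : {x : K // x ≠ 0} ≃ F) (s t : K) (h : s ≠ t) :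
    GG ψ s * GG ψ t = (1 + ((Fintype.card F : ℝ) - 2) *
      ((if s = 0 then 1 else 0) + if t = 0 then 1 else 0)) • allOnes (F × F) := by
  unfold GG
  by_cases hs : s = 0
  · subst hs
    simp [Ne.symm h, DC]
    congr 1; ring
  · by_cases ht : t = 0
    · subst ht
      simp [hs, CD]
      congr 1; ring
    · simp [hs, ht]
      apply CC_ne
      simpa using h

lemma GG_sum_sq (ψ : {x : K // x ≠ 0} ≃ F) (x y : F × F) :
    ∑ t : K, (GG ψ t * GG ψ t) x y =
      (Fintype.card F : ℝ) ^ 2 * (1 : Matrix (F × F) (F × F) ℝ) x y +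
      (Fintype.card F : ℝ) * ((Fintype.card F : ℝ) - 1) := by
  rw [Fintype.sum_eq_add_sum_subtype_ne _ (0:K)]
  have h1 : ∀ γ : {x : K // x ≠ 0}, (GG ψ γ * GG ψ γ) x y =
      (Fintype.card F : ℝ) * auxC (ψ γ) x y := by
    intro γ
    have : GG ψ γ = auxC (ψ γ) := by simp [GG, γ.2]
    rw [this, CC_same]; simp
  have h0 : GG ψ 0 = DD F := by simp [GG]
  rw [Finset.sum_congr rfl fun γ _ => h1 γ, ← Finset.mul_sum,
    Equiv.sum_comp ψ (fun α => auxC α x y), sumC_apply, h0, DD_sq_apply, DD_apply]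
  ring

lemma M_apply (ψ : {x : K // x ≠ 0} ≃ F) (β : K) (hβ : β ≠ 0) (p r : K × (F × F)) :
    (NN ψ β + (1 : Matrix K K ℝ) ⊗ₖ (allOnes (F × F) - (1 : Matrix F F ℝ) ⊗ₖ allOnes F)) p r =
      GG ψ (β * (r.1 - p.1)) p.2 r.2 := by
  change (NN ψ β + (1 : Matrix K K ℝ) ⊗ₖ DD F) p r = _
  simp only [NN, Matrix.add_apply, Matrix.sum_apply, Matrix.kroneckerMap_apply, permP, of_apply,
    Matrix.one_apply, neg_add_eq_sub]
  by_cases h : p.1 = r.1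
  · have : ∀ γ : {x : K // x ≠ 0}, (0:K) ≠ γ := fun γ => γ.2.symm
    simp [h, GG, this]
  · have h0 : β * (r.1 - p.1) ≠ 0 := mul_ne_zero hβ (sub_ne_zero.2 (Ne.symm h))
    rw [Finset.sum_eq_single ⟨_, h0⟩]
    · rw [GG, dif_pos h0]; simp [h]
    · intro γ _ hγ
      rw [if_neg, zero_mul]
      intro h2; exact hγ (Subtype.ext h2.symm)
    · simp

lemma M_mul (hcard : Fintype.card K = Fintype.card F + 1)
    (ψ : {x : K // x ≠ 0} ≃ F) (β : K) (hβ : β ≠ 0) :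
    (NN ψ β + (1 : Matrix K K ℝ) ⊗ₖ (allOnes (F × F) - (1 : Matrix F F ℝ) ⊗ₖ allOnes F)) *
        (NN ψ β + (1 : Matrix K K ℝ) ⊗ₖ (allOnes (F × F) - (1 : Matrix F F ℝ) ⊗ₖ allOnes F))ᵀ =
      (Fintype.card F : ℝ) ^ 2 • (1 : Matrix (K × (F × F)) (K × (F × F)) ℝ) +
        (((Fintype.card F : ℝ) - 1) * ((Fintype.card F : ℝ) - 3)) •
          ((1 : Matrix K K ℝ) ⊗ₖ allOnes (F × F)) +
        (3 * ((Fintype.card F : ℝ) - 1)) • allOnes (K × (F × F)) := by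
  ext ⟨a, x⟩ ⟨b, y⟩
  rw [Matrix.mul_apply]
  simp only [Matrix.transpose_apply, M_apply ψ β hβ]
  rw [Fintype.sum_prod_type]
  have h1 : ∀ c : K, ∑ z : F × F, GG ψ (β * (c - a)) x z * GG ψ (β * (c - b)) y z =
      (GG ψ (β * (c - a)) * GG ψ (β * (c - b))) x y := by
    intro c
    rw [Matrix.mul_apply]
    refine Finset.sum_congr rfl fun z _ => ?_
    congr 1
    rw [← GG_symm, transpose_apply, GG_symm]
  simp only [h1]
  by_cases hab : a = b
  · subst hab
    have h2 := Equiv.sum_comp ((Equiv.subRight a).trans (Equiv.mulLeft₀ β hβ))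
      (fun t => (GG ψ t * GG ψ t) x y)
    simp only [Equiv.trans_apply, Equiv.subRight_apply, Equiv.mulLeft₀_apply] at h2
    rw [h2, GG_sum_sq]
    simp [allOnes, Matrix.kroneckerMap_apply, Matrix.one_apply]
    ring
  · have h2 : ∀ c : K, β * (c - a) ≠ β * (c - b) := by
      intro c h
      have := mul_left_cancel₀ hβ h
      exact hab (by linear_combination -this)
    simp only [GG_mul_ne ψ _ _ (h2 _)]
    simp [allOnes, Matrix.kroneckerMap_apply, Matrix.one_apply, hab, hβ, sub_eq_zero,
      Finset.sum_add_distrib, ← Finset.mul_sum, hcard]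
    ring

lemma M_transpose (ψ : {x : K // x ≠ 0} ≃ F) (β : K) (hβ : β ≠ 0) :
    (NN ψ β + (1 : Matrix K K ℝ) ⊗ₖ (allOnes (F × F) - (1 : Matrix F F ℝ) ⊗ₖ allOnes F))ᵀ =
    NN ψ (-β) + (1 : Matrix K K ℝ) ⊗ₖ (allOnes (F × F) - (1 : Matrix F F ℝ) ⊗ₖ allOnes F) := by
  ext p r
  have e : -β * (r.1 - p.1) = β * (p.1 - r.1) := by ring
  rw [transpose_apply, M_apply ψ β hβ, M_apply ψ (-β) (neg_ne_zero.2 hβ), e]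
  exact congrFun (congrFun (GG_symm ψ (β * (p.1 - r.1))) p.2) r.2

end aux

/-- In the consecutive prime power construction, `M = N_β + I_{q+1} ⊗ (J_{q²} − I_q ⊗ J_q)`
is a `(0,1)`-matrix satisfying
`M·Mᵀ = Mᵀ·M = q²·I + (q−1)(q−3)·(I_{q+1} ⊗ J_{q²}) + 3(q−1)·J`, i.e. it is the incidence
matrix of a symmetric group divisible design with parameters
`((q+1)q², 2q²−q, q+1, q², q(q−1), 3(q−1))`. -/
theorem NN_gdd {F K : Type*} [Field F] [Fintype F] [DecidableEq F]
    [Field K] [Fintype K] [DecidableEq K]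
    (hcard : Fintype.card K = Fintype.card F + 1)
    (ψ : {x : K // x ≠ 0} ≃ F) (β : K) (hβ : β ≠ 0) :
    (∀ p r, (NN ψ β +
        (1 : Matrix K K ℝ) ⊗ₖ (allOnes (F × F) - (1 : Matrix F F ℝ) ⊗ₖ allOnes F)) p r = 0 ∨
      (NN ψ β +
        (1 : Matrix K K ℝ) ⊗ₖ (allOnes (F × F) - (1 : Matrix F F ℝ) ⊗ₖ allOnes F)) p r = 1) ∧
    (NN ψ β + (1 : Matrix K K ℝ) ⊗ₖ (allOnes (F × F) - (1 : Matrix F F ℝ) ⊗ₖ allOnes F)) *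
        (NN ψ β + (1 : Matrix K K ℝ) ⊗ₖ (allOnes (F × F) - (1 : Matrix F F ℝ) ⊗ₖ allOnes F))ᵀ =
      (Fintype.card F : ℝ) ^ 2 • (1 : Matrix (K × (F × F)) (K × (F × F)) ℝ) +
        (((Fintype.card F : ℝ) - 1) * ((Fintype.card F : ℝ) - 3)) •
          ((1 : Matrix K K ℝ) ⊗ₖ allOnes (F × F)) +
        (3 * ((Fintype.card F : ℝ) - 1)) • allOnes (K × (F × F)) ∧
    (NN ψ β + (1 : Matrix K K ℝ) ⊗ₖ (allOnes (F × F) - (1 : Matrix F F ℝ) ⊗ₖ allOnes F))ᵀ *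
        (NN ψ β + (1 : Matrix K K ℝ) ⊗ₖ (allOnes (F × F) - (1 : Matrix F F ℝ) ⊗ₖ allOnes F)) =
      (Fintype.card F : ℝ) ^ 2 • (1 : Matrix (K × (F × F)) (K × (F × F)) ℝ) +
        (((Fintype.card F : ℝ) - 1) * ((Fintype.card F : ℝ) - 3)) •
          ((1 : Matrix K K ℝ) ⊗ₖ allOnes (F × F)) +
        (3 * ((Fintype.card F : ℝ) - 1)) • allOnes (K × (F × F)) := by
  refine ⟨fun p r => ?_, M_mul hcard ψ β hβ, ?_⟩
  · rw [M_apply ψ β hβ, GG]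
    split_ifs
    · simp only [auxC, of_apply]
      split_ifs <;> simp
    · rw [DD_apply]
      split_ifs <;> simp
  · have h := M_mul hcard ψ (-β) (neg_ne_zero.2 hβ)
    rw [← M_transpose ψ β hβ, transpose_transpose] at h
    exact h
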